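/- Fix k ≥ 1. Let x = (y, x_na) ∈ ℝ^{ny}×ℝ^{n−ny}, inputs c₀,…,c_{k−1} ∈ ℝ^m, uncertainties p₀,…,p_{k−1} ∈ ℝ^q, and predictions x̂₀ := x, x̂_{j+1} := Φ_K x̂_j + G c_j + B_p p_j. Write w := (x_na, p₀, …, p_{k−1}) and z := (y, c₀, …, c_{k−1}). Suppose symmetric F̄, matrix D̄, symmetric Ē satisfy ‖C x̂_k‖₂² = wᵀ F̄ w + 2 wᵀ D̄ z + zᵀ Ē z identically in (w,z); for each i ∈ {0,…,k−1}, symmetric Zᵢ, matrix Mᵢ, symmetric Nᵢ satisfy ‖C_K x̂ᵢ + D_q cᵢ‖₂² − ‖pᵢ‖₂² = wᵀ Zᵢ w + 2 wᵀ Mᵢ z + zᵀ Nᵢ z identically; and S̄ := blockdiag(−S, 0). Let θ₀,…,θ_k ≥ 0 with Θ := −F̄ − Σ_{i=0}^{k−1} θᵢ Zᵢ − θ_k S̄ ≻ 0, T̂ with T̂ᵀ T̂ = Ē + Σ θᵢ Nᵢ + (D̄ + Σ θᵢ Mᵢ)ᵀ Θ^{-1} (D̄ + Σ θᵢ Mᵢ),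 and suppose [[x̄² − θ_k , −(T̂ z)ᵀ],[−T̂ z , I]] ⪰ 0. Then for all x_na with x_naᵀ S x_na ≤ 1 and all p₀,…,p_{k−1} with ‖pᵢ‖₂² ≤ ‖C_K x̂ᵢ + D_q cᵢ‖₂² for each i, the predicted state satisfies ‖C x̂_k‖₂² ≤ x̄². -/

import Mathlib

/-!
The argument is the S-procedure followed by a Schur complement. With `w = (x_na, p)` and
`z = (y, c)`, adding the nonnegative multiples `θᵢ (‖C_K x̂ᵢ + D_q cᵢ‖² - ‖pᵢ‖²)` and
`θ' (1 - x_naᵀ S x_na)` of the constraints to `‖C x̂_k‖²` gives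

  `‖C x̂_k‖² ≤ -wᵀ Θ w + 2 wᵀ v + zᵀ (Em + ∑ θᵢ Nᵢ) z + θ'`,  `v = (Dm + ∑ θᵢ Mᵢ) z`.

Completing the square in `w` (`two_dotProduct_sub_le`) bounds the right-hand side by
`vᵀ Θ⁻¹ v + zᵀ (Em + ∑ θᵢ Nᵢ) z + θ' = ‖L z‖² + θ'`, and the linear matrix inequality forces
this to be at most `xb²` (`dotProduct_self_le_of_posSemidef`).
-/

open Matrix

/-- The `j`-step-ahead prediction `x̂_j` generated by
`x̂_0 = x0`, `x̂_{j+1} = Φ_K x̂_j + G c_j + B_p p_j`. -/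
def pred {n : Type*} [Fintype n] {m q : ℕ} (ΦK : Matrix n n ℝ)
    (G : Matrix n (Fin m) ℝ) (Bp : Matrix n (Fin q) ℝ)
    (x0 : n → ℝ) (c : ℕ → Fin m → ℝ) (p : ℕ → Fin q → ℝ) : ℕ → n → ℝ
  | 0 => x0
  | j + 1 => ΦK *ᵥ pred ΦK G Bp x0 c p j + G *ᵥ c j + Bp *ᵥ p j

/-- Completing the square: the concave function `w ↦ 2 wᵀ v - wᵀ Θ w` is at most its value
`vᵀ Θ⁻¹ v` at the maximizer `w = Θ⁻¹ v`. -/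
lemma two_dotProduct_sub_le {ι : Type*} [Fintype ι] [DecidableEq ι] {Θ : Matrix ι ι ℝ}
    (hΘ : Θ.PosDef) (w v : ι → ℝ) :
    2 * (w ⬝ᵥ v) - w ⬝ᵥ (Θ *ᵥ w) ≤ v ⬝ᵥ (Θ⁻¹ *ᵥ v) := by
  have hT : Θᵀ = Θ := by simpa [Matrix.IsHermitian] using hΘ.1
  have hv : Θ *ᵥ (Θ⁻¹ *ᵥ v) = v := by
    rw [mulVec_mulVec, mul_nonsing_inv _ ((isUnit_iff_isUnit_det _).mp hΘ.isUnit), one_mulVec]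
  have h := hΘ.posSemidef.dotProduct_mulVec_nonneg (w - Θ⁻¹ *ᵥ v)
  have hcross : (Θ⁻¹ *ᵥ v) ⬝ᵥ (Θ *ᵥ w) = w ⬝ᵥ v := by
    rw [dotProduct_mulVec, ← mulVec_transpose, hT, hv, dotProduct_comm]
  rw [star_trivial, mulVec_sub, hv, sub_dotProduct, dotProduct_sub, dotProduct_sub, hcross,
    dotProduct_comm (Θ⁻¹ *ᵥ v) v] at h
  linarith

/-- The easy half of the Schur complement criterion: testing the block matrix against `(1, u)`. -/
lemma dotProduct_self_le_of_posSemidef {s : ℕ} {a : ℝ} {u : Fin s → ℝ}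
    (h : (Matrix.fromBlocks
        (Matrix.of fun (_ : Fin 1) (_ : Fin 1) => a)
        (Matrix.of fun (_ : Fin 1) (j : Fin s) => -(u j))
        (Matrix.of fun (i : Fin s) (_ : Fin 1) => -(u i))
        (1 : Matrix (Fin s) (Fin s) ℝ)).PosSemidef) :
    u ⬝ᵥ u ≤ a := by
  have h1 := h.dotProduct_mulVec_nonneg (Sum.elim (fun _ => 1) u)
  simp [dotProduct, mulVec, one_apply] at h1
  simp only [dotProduct]
  linarith

lemma dotProduct_sum_smul_mulVec {ι κ α : Type*} [Fintype ι] [Fintype κ] [Fintype α]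
    (t : α → ℝ) (A : α → Matrix ι κ ℝ) (w : ι → ℝ) (z : κ → ℝ) :
    w ⬝ᵥ ((∑ i, t i • A i) *ᵥ z) = ∑ i, t i * (w ⬝ᵥ (A i *ᵥ z)) := by
  simp [sum_mulVec, dotProduct_sum, smul_mulVec, dotProduct_smul]

theorem stmt_15
    {ny nna m q s : ℕ} (k : ℕ) (hk : 1 ≤ k)
    (ΦK : Matrix (Fin ny ⊕ Fin nna) (Fin ny ⊕ Fin nna) ℝ)
    (G : Matrix (Fin ny ⊕ Fin nna) (Fin m) ℝ)
    (Bp : Matrix (Fin ny ⊕ Fin nna) (Fin q) ℝ)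
    (CK : Matrix (Fin q) (Fin ny ⊕ Fin nna) ℝ)
    (Dq : Matrix (Fin q) (Fin m) ℝ)
    (C : Matrix (Fin ny) (Fin ny ⊕ Fin nna) ℝ)
    (xb : ℝ) (hxb : 0 < xb)
    (S : Matrix (Fin nna) (Fin nna) ℝ) (hS : S.PosSemidef)
    (y : Fin ny → ℝ) (c : ℕ → Fin m → ℝ)
    (Fm : Matrix (Fin nna ⊕ (Fin k × Fin q)) (Fin nna ⊕ (Fin k × Fin q)) ℝ) (hFms : Fm.IsSymm)
    (Dm : Matrix (Fin nna ⊕ (Fin k × Fin q)) (Fin ny ⊕ (Fin k × Fin m)) ℝ)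
    (Em : Matrix (Fin ny ⊕ (Fin k × Fin m)) (Fin ny ⊕ (Fin k × Fin m)) ℝ) (hEms : Em.IsSymm)
    (hFDE : ∀ (y' : Fin ny → ℝ) (xna' : Fin nna → ℝ)
        (c' : ℕ → Fin m → ℝ) (p' : ℕ → Fin q → ℝ),
      (C *ᵥ pred ΦK G Bp (Sum.elim y' xna') c' p' k) ⬝ᵥ (C *ᵥ pred ΦK G Bp (Sum.elim y' xna') c' p' k)
      = (Sum.elim xna' (fun ij => p' ij.1 ij.2) : Fin nna ⊕ (Fin k × Fin q) → ℝ) ⬝ᵥ (Fm *ᵥ (Sum.elim xna' (fun ij => p' ij.1 ij.2) : Fin nna ⊕ (Fin k × Fin q) → ℝ)) +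
        2 * ((Sum.elim xna' (fun ij => p' ij.1 ij.2) : Fin nna ⊕ (Fin k × Fin q) → ℝ) ⬝ᵥ (Dm *ᵥ (Sum.elim y' (fun ij => c' ij.1 ij.2) : Fin ny ⊕ (Fin k × Fin m) → ℝ))) +
        (Sum.elim y' (fun ij => c' ij.1 ij.2) : Fin ny ⊕ (Fin k × Fin m) → ℝ) ⬝ᵥ (Em *ᵥ (Sum.elim y' (fun ij => c' ij.1 ij.2) : Fin ny ⊕ (Fin k × Fin m) → ℝ)))
    (Zm : Fin k → Matrix (Fin nna ⊕ (Fin k × Fin q)) (Fin nna ⊕ (Fin k × Fin q)) ℝ) (hZs : ∀ i, (Zm i).IsSymm)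
    (Mm : Fin k → Matrix (Fin nna ⊕ (Fin k × Fin q)) (Fin ny ⊕ (Fin k × Fin m)) ℝ)
    (Nm : Fin k → Matrix (Fin ny ⊕ (Fin k × Fin m)) (Fin ny ⊕ (Fin k × Fin m)) ℝ) (hNs : ∀ i, (Nm i).IsSymm)
    (hZMN : ∀ (i : Fin k) (y' : Fin ny → ℝ) (xna' : Fin nna → ℝ)
        (c' : ℕ → Fin m → ℝ) (p' : ℕ → Fin q → ℝ),
      (CK *ᵥ pred ΦK G Bp (Sum.elim y' xna') c' p' (i : ℕ) + Dq *ᵥ c' i) ⬝ᵥ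
          (CK *ᵥ pred ΦK G Bp (Sum.elim y' xna') c' p' (i : ℕ) + Dq *ᵥ c' i) -
        (p' i) ⬝ᵥ (p' i)
      = (Sum.elim xna' (fun ij => p' ij.1 ij.2) : Fin nna ⊕ (Fin k × Fin q) → ℝ) ⬝ᵥ ((Zm i) *ᵥ (Sum.elim xna' (fun ij => p' ij.1 ij.2) : Fin nna ⊕ (Fin k × Fin q) → ℝ)) +
        2 * ((Sum.elim xna' (fun ij => p' ij.1 ij.2) : Fin nna ⊕ (Fin k × Fin q) → ℝ) ⬝ᵥ ((Mm i) *ᵥ (Sum.elim y' (fun ij => c' ij.1 ij.2) : Fin ny ⊕ (Fin k × Fin m) → ℝ))) +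
        (Sum.elim y' (fun ij => c' ij.1 ij.2) : Fin ny ⊕ (Fin k × Fin m) → ℝ) ⬝ᵥ ((Nm i) *ᵥ (Sum.elim y' (fun ij => c' ij.1 ij.2) : Fin ny ⊕ (Fin k × Fin m) → ℝ)))
    (Sbar : Matrix (Fin nna ⊕ (Fin k × Fin q)) (Fin nna ⊕ (Fin k × Fin q)) ℝ)
    (hSbar : Sbar = Matrix.fromBlocks (-S) 0 0 0)
    (θ : Fin k → ℝ) (hθ : ∀ i, 0 ≤ θ i) (θ' : ℝ) (hθ'0 : 0 ≤ θ')
    (Θ : Matrix (Fin nna ⊕ (Fin k × Fin q)) (Fin nna ⊕ (Fin k × Fin q)) ℝ)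
    (hΘ : Θ = -Fm - (∑ i, θ i • Zm i) - θ' • Sbar) (hΘpos : Θ.PosDef)
    (L : Matrix (Fin s) (Fin ny ⊕ (Fin k × Fin m)) ℝ)
    (hL : Lᵀ * L = Em + (∑ i, θ i • Nm i) +
      (Dm + ∑ i, θ i • Mm i)ᵀ * Θ⁻¹ * (Dm + ∑ i, θ i • Mm i))
    (hLMI : (Matrix.fromBlocks
        (Matrix.of fun (_ : Fin 1) (_ : Fin 1) => xb ^ 2 - θ')
        (Matrix.of fun (_ : Fin 1) (j : Fin s) => -((L *ᵥ (Sum.elim y (fun ij => c ij.1 ij.2) : Fin ny ⊕ (Fin k × Fin m) → ℝ)) j))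
        (Matrix.of fun (i : Fin s) (_ : Fin 1) => -((L *ᵥ (Sum.elim y (fun ij => c ij.1 ij.2) : Fin ny ⊕ (Fin k × Fin m) → ℝ)) i))
        (1 : Matrix (Fin s) (Fin s) ℝ)).PosSemidef) :
    ∀ (xna : Fin nna → ℝ) (p : ℕ → Fin q → ℝ),
      xna ⬝ᵥ (S *ᵥ xna) ≤ 1 →
      (∀ i : Fin k,
        (p i) ⬝ᵥ (p i) ≤
          (CK *ᵥ pred ΦK G Bp (Sum.elim y xna) c p (i : ℕ) + Dq *ᵥ c i) ⬝ᵥ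
            (CK *ᵥ pred ΦK G Bp (Sum.elim y xna) c p (i : ℕ) + Dq *ᵥ c i)) →
      ((C *ᵥ pred ΦK G Bp (Sum.elim y xna) c p k) ⬝ᵥ (C *ᵥ pred ΦK G Bp (Sum.elim y xna) c p k)) ≤ xb ^ 2 := by
  intro xna p hxna hp
  have hF := hFDE y xna c p
  have hZ := fun i => hZMN i y xna c p
  have hLz := dotProduct_self_le_of_posSemidef hLMI
  have hSw : (Sum.elim xna (fun ij => p ij.1 ij.2) : Fin nna ⊕ (Fin k × Fin q) → ℝ) ⬝ᵥ
      (Sbar *ᵥ (Sum.elim xna (fun ij => p ij.1 ij.2) : Fin nna ⊕ (Fin k × Fin q) → ℝ))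
      = -(xna ⬝ᵥ (S *ᵥ xna)) := by
    simp [hSbar, fromBlocks_mulVec, neg_mulVec]
  set w : Fin nna ⊕ (Fin k × Fin q) → ℝ := Sum.elim xna (fun ij => p ij.1 ij.2)
  set z : Fin ny ⊕ (Fin k × Fin m) → ℝ := Sum.elim y (fun ij => c ij.1 ij.2)
  have hsum : 0 ≤ ∑ i, θ i * (w ⬝ᵥ (Zm i *ᵥ w) + 2 * (w ⬝ᵥ (Mm i *ᵥ z)) + z ⬝ᵥ (Nm i *ᵥ z)) := by
    refine Finset.sum_nonneg fun i _ => mul_nonneg (hθ i) ?_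
    rw [← hZ i]
    exact sub_nonneg.mpr (hp i)
  have hsplit : ∑ i, θ i * (w ⬝ᵥ (Zm i *ᵥ w) + 2 * (w ⬝ᵥ (Mm i *ᵥ z)) + z ⬝ᵥ (Nm i *ᵥ z))
      = w ⬝ᵥ ((∑ i, θ i • Zm i) *ᵥ w) + 2 * (w ⬝ᵥ ((∑ i, θ i • Mm i) *ᵥ z))
        + z ⬝ᵥ ((∑ i, θ i • Nm i) *ᵥ z) := by
    simp only [dotProduct_sum_smul_mulVec, Finset.mul_sum, ← Finset.sum_add_distrib]
    exact Finset.sum_congr rfl fun i _ => by ring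
  have hS1 : 0 ≤ θ' * (1 - xna ⬝ᵥ (S *ᵥ xna)) := mul_nonneg hθ'0 (sub_nonneg.mpr hxna)
  have hsq := two_dotProduct_sub_le hΘpos w ((Dm + ∑ i, θ i • Mm i) *ᵥ z)
  have hΘw : w ⬝ᵥ (Θ *ᵥ w) = -(w ⬝ᵥ (Fm *ᵥ w)) - w ⬝ᵥ ((∑ i, θ i • Zm i) *ᵥ w)
      + θ' * (xna ⬝ᵥ (S *ᵥ xna)) := by
    rw [hΘ, sub_mulVec, sub_mulVec, neg_mulVec, smul_mulVec, dotProduct_sub, dotProduct_sub,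
      dotProduct_neg, dotProduct_smul, hSw, smul_eq_mul]
    ring
  have hLL : (L *ᵥ z) ⬝ᵥ (L *ᵥ z) = z ⬝ᵥ (Em *ᵥ z) + z ⬝ᵥ ((∑ i, θ i • Nm i) *ᵥ z)
      + ((Dm + ∑ i, θ i • Mm i) *ᵥ z) ⬝ᵥ (Θ⁻¹ *ᵥ ((Dm + ∑ i, θ i • Mm i) *ᵥ z)) := by
    have htr : ∀ {κ : Type} [Fintype κ] (A : Matrix κ (Fin ny ⊕ (Fin k × Fin m)) ℝ) (v : κ → ℝ),
        (A *ᵥ z) ⬝ᵥ v = z ⬝ᵥ (Aᵀ *ᵥ v) := fun A v => by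
      rw [dotProduct_mulVec, vecMul_transpose]
    rw [htr L, htr (Dm + ∑ i, θ i • Mm i), mulVec_mulVec, hL, add_mulVec, add_mulVec,
      dotProduct_add, dotProduct_add, mulVec_mulVec, mulVec_mulVec, Matrix.mul_assoc]
  rw [hΘw, add_mulVec, dotProduct_add] at hsq
  rw [add_mulVec] at hLL
  rw [hF]
  linarith
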